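/- Equip ℤ^n with the lexicographic order. For every integral polytope P in ℝ^n, the set of extreme points of P is a nonempty finite subset of ℤ^n; let m(P) denote its lexicographically least element. Then for all integral polytopes P and Q in ℝ^n one has m(P + Q) = m(P) + m(Q), and m({h}) = h for every h ∈ ℤ^n. (This map yields the splitting of the exact sequence 0 → H → P_ℤ(H) → P_ℤ^Wh(H) → 0.) -/

import Mathlib

/-!
Order `ℝ^n` lexicographically as well. This makes it a linearly ordered real vector space, so an
upper set `{x | u ≤ x}` is convex, and a point `a • x + b • y` with `a, b > 0`, `a + b = 1` and
`u ≤ x, y` equals `u` only if `x = y = u` (`lex_combo_eq`). Hence the lexicographic minimum of the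
finite generating set of an integral polytope `P` is a lexicographic minimum of all of `P` and is an
extreme point (`exists_lexLeast`); the extreme points being among the generators, `m(P)` is exactly
the lexicographic minimum of the set `P` (`IsLexMinExtreme.le`). Since translation preserves the
order, minima of sets add under Minkowski sum, and `P + Q` is again an integral polytope.
-/

open Pointwise

/-- The standard embedding `ℤ^n → ℝ^n`. -/
def embedR {n : ℕ} (z : Fin n → ℤ) : Fin n → ℝ := fun i => (z i : ℝ)

/-- An integral polytope in `ℝ^n`: the convex hull of a nonempty finite
subset of the lattice `ℤ^n ⊆ ℝ^n`. -/
def IsIntegralPolytope {n : ℕ} (P : Set (Fin n → ℝ)) : Prop :=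
  ∃ S : Finset (Fin n → ℤ), S.Nonempty ∧
    P = convexHull ℝ (embedR '' (S : Set (Fin n → ℤ)))

/-- `v ∈ ℤ^n` is the lexicographically least extreme point of `P`. -/
def IsLexMinExtreme {n : ℕ} (P : Set (Fin n → ℝ)) (v : Fin n → ℤ) : Prop :=
  embedR v ∈ Set.extremePoints ℝ P ∧
    ∀ w : Fin n → ℤ, embedR w ∈ Set.extremePoints ℝ P → toLex v ≤ toLex w

section LexOrder

variable {n : ℕ}

theorem lex_smul_lt {a : ℝ} (ha : 0 < a) {x y : Fin n → ℝ} (h : toLex x < toLex y) :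
    toLex (a • x) < toLex (a • y) := by
  obtain ⟨i, hi, hlt⟩ := h
  refine ⟨i, fun j hj => ?_, ?_⟩
  · have := hi j hj
    simp_all
  · simpa using mul_lt_mul_of_pos_left hlt ha

theorem lex_smul_le {a : ℝ} (ha : 0 < a) {x y : Fin n → ℝ} (h : toLex x ≤ toLex y) :
    toLex (a • x) ≤ toLex (a • y) := by
  rcases h.eq_or_lt with h | h
  · rw [toLex_inj.1 h]
  · exact (lex_smul_lt ha h).le

theorem lex_le_combo {a b : ℝ} (ha : 0 < a) (hb : 0 < b) (hab : a + b = 1)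
    {u x y : Fin n → ℝ} (hx : toLex u ≤ toLex x) (hy : toLex u ≤ toLex y) :
    toLex u ≤ toLex (a • x + b • y) := by
  have h := add_le_add (lex_smul_le ha hx) (lex_smul_le hb hy)
  rwa [← toLex_add, ← toLex_add, ← add_smul, hab, one_smul] at h

theorem lex_combo_eq {a b : ℝ} (ha : 0 < a) (hb : 0 < b) (hab : a + b = 1)
    {u x y : Fin n → ℝ} (hx : toLex u ≤ toLex x) (hy : toLex u ≤ toLex y)
    (h : a • x + b • y = u) : x = u := by
  by_contra hne
  have hlt : toLex u < toLex x := lt_of_le_of_ne hx fun e => hne (toLex_inj.1 e).symm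
  have h' := add_lt_add_of_lt_of_le (lex_smul_lt ha hlt) (lex_smul_le hb hy)
  rw [← toLex_add, ← toLex_add, ← add_smul, hab, one_smul, h] at h'
  exact lt_irrefl _ h'

theorem convex_lex_upper (u : Fin n → ℝ) : Convex ℝ {x | toLex u ≤ toLex x} :=
  convex_iff_forall_pos.2 fun _ hx _ hy _ _ ha hb hab => lex_le_combo ha hb hab hx hy

theorem embedR_lex_le {v w : Fin n → ℤ} (h : toLex v ≤ toLex w) :
    toLex (embedR v) ≤ toLex (embedR w) := by
  rcases h.eq_or_lt with h | h
  · rw [toLex_inj.1 h]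
  · obtain ⟨i, hi, hlt⟩ := h
    exact le_of_lt ⟨i, fun j hj => congrArg (Int.cast : ℤ → ℝ) (hi j hj), Int.cast_lt.2 hlt⟩

theorem embedR_injective : Function.Injective (embedR : (Fin n → ℤ) → Fin n → ℝ) :=
  fun _ _ h => funext fun i => Int.cast_injective (congrFun h i)

theorem embedR_add (v w : Fin n → ℤ) : embedR (v + w) = embedR v + embedR w :=
  funext fun i => Int.cast_add (v i) (w i)

end LexOrder

section Polytope

variable {n : ℕ} {P Q : Set (Fin n → ℝ)}

/-- An integral polytope has a lexicographically least point; it is a lattice point and extreme. -/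
theorem exists_lexLeast (hP : IsIntegralPolytope P) :
    ∃ m : Fin n → ℤ, embedR m ∈ Set.extremePoints ℝ P ∧
      ∀ x ∈ P, toLex (embedR m) ≤ toLex x := by
  obtain ⟨S, hS, rfl⟩ := hP
  obtain ⟨m, hmS, hm⟩ := S.exists_min_image toLex hS
  have hle : ∀ x ∈ convexHull ℝ (embedR '' (S : Set (Fin n → ℤ))),
      toLex (embedR m) ≤ toLex x := by
    refine convexHull_min ?_ (convex_lex_upper (embedR m))
    rintro _ ⟨s, hs, rfl⟩
    exact embedR_lex_le (hm s hs)
  refine ⟨m, ⟨subset_convexHull ℝ _ ⟨m, hmS, rfl⟩, ?_⟩, hle⟩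
  rintro x hx y hy ⟨a, b, ha, hb, hab, h⟩
  exact lex_combo_eq ha hb hab (hle x hx) (hle y hy) h

/-- The lexicographically least extreme point is least among all points of the polytope. -/
theorem IsLexMinExtreme.le (hP : IsIntegralPolytope P) {v : Fin n → ℤ}
    (hv : IsLexMinExtreme P v) : ∀ x ∈ P, toLex (embedR v) ≤ toLex x := by
  obtain ⟨m, hm, hle⟩ := exists_lexLeast hP
  exact fun x hx => (embedR_lex_le (hv.2 m hm)).trans (hle x hx)

theorem IsIntegralPolytope.add (hP : IsIntegralPolytope P) (hQ : IsIntegralPolytope Q) :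
    IsIntegralPolytope (P + Q) := by
  classical
  obtain ⟨S, hS, rfl⟩ := hP
  obtain ⟨T, hT, rfl⟩ := hQ
  refine ⟨S + T, hS.add hT, ?_⟩
  rw [← convexHull_add, Finset.coe_add]
  congr 1
  exact (Set.image_image2_distrib embedR_add).symm

end Polytope

/-- The extreme points of an integral polytope form a nonempty finite subset of
the lattice `ℤ^n`; sending a polytope `P` to its lexicographically least
extreme point `m(P)` satisfies `m(P + Q) = m(P) + m(Q)` and `m({h}) = h`. -/
theorem lexMin_extremePoint_additive {n : ℕ} :
    (∀ P : Set (Fin n → ℝ), IsIntegralPolytope P →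
        (Set.extremePoints ℝ P).Nonempty ∧ (Set.extremePoints ℝ P).Finite ∧
          ∀ x ∈ Set.extremePoints ℝ P, ∃ z : Fin n → ℤ, x = embedR z) ∧
    (∀ P Q : Set (Fin n → ℝ), IsIntegralPolytope P → IsIntegralPolytope Q →
        ∀ vP vQ vPQ : Fin n → ℤ, IsLexMinExtreme P vP → IsLexMinExtreme Q vQ →
          IsLexMinExtreme (P + Q) vPQ → vPQ = vP + vQ) ∧
    (∀ h : Fin n → ℤ, IsLexMinExtreme {embedR h} h) := by
  refine ⟨fun P hP => ⟨?_, ?_⟩, fun P Q hP hQ vP vQ vPQ hvP hvQ hvPQ => ?_, fun h => ⟨?_, ?_⟩⟩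
  · obtain ⟨m, hm, -⟩ := exists_lexLeast hP
    exact ⟨_, hm⟩
  · obtain ⟨S, hS, rfl⟩ := hP
    refine ⟨(S.finite_toSet.image embedR).subset extremePoints_convexHull_subset,
      fun x hx => ?_⟩
    obtain ⟨z, -, hz⟩ := extremePoints_convexHull_subset hx
    exact ⟨z, hz.symm⟩
  · apply embedR_injective
    apply toLex_inj.1
    refine le_antisymm (hvPQ.le (hP.add hQ) _ ?_) ?_
    · rw [embedR_add]
      exact Set.add_mem_add hvP.1.1 hvQ.1.1
    · obtain ⟨p, hp, q, hq, hpq⟩ := hvPQ.1.1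
      rw [embedR_add, ← hpq]
      exact add_le_add (hvP.le hP p hp) (hvQ.le hQ q hq)
  · simp
  · intro w hw
    rw [extremePoints_singleton] at hw
    rw [embedR_injective hw]
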